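/- Let n, d be positive integers and let Z_i, Z_j ∈ ℝ^{n×d}. Set G_i = Z_i Z_iᵀ. Then tr((G_i^{1/2} (Z_j Z_jᵀ) G_i^{1/2})^{1/2}) = tr((Mᵀ M)^{1/2}), where M = Z_jᵀ Z_i and S^{1/2} denotes the unique positive-semidefinite square root of a positive-semidefinite matrix S. In other words, the trace term appearing in the Riemannian distance formula on positive-semidefinite matrices equals the sum of the singular values of Z_jᵀ Z_i. -/

import Mathlib

open Matrix

/-!
The trace of a positive-semidefinite `S` is the sum of the square roots of the roots of the
characteristic polynomial of `S * S`. Such a sum does not see the root `0`, and the characteristic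
polynomials of `A * B` and `B * A` differ only by a power of `X`, so both products give the same
sum. With `G = Zi * Ziᵀ` and `H = Zj * Zjᵀ`, moving the leftmost factor of
`G ^ (1/2) * H * G ^ (1/2)` or of `Ziᵀ * H * Zi` to the right end gives `H * G` in both cases.
-/

section RootSum

open Polynomial

variable {K M : Type*} [CommRing K] [IsDomain K] [AddCommMonoid M] {f : K → M}

theorem sum_map_roots_X_pow_mul (hf : f 0 = 0) (k : ℕ) (p : K[X]) :
    ((X ^ k * p).roots.map f).sum = (p.roots.map f).sum := by
  obtain rfl | hp := eq_or_ne p 0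
  · rw [mul_zero]
  rw [roots_mul (mul_ne_zero (pow_ne_zero k X_ne_zero) hp), roots_X_pow]
  simp [Multiset.map_nsmul, Multiset.sum_nsmul, hf]

variable {l m n : Type*} [Fintype l] [Fintype m] [Fintype n] [DecidableEq l] [DecidableEq m]

theorem sum_map_roots_charpoly_mul_comm [DecidableEq n] (hf : f 0 = 0)
    (A : Matrix m n K) (B : Matrix n m K) :
    ((A * B).charpoly.roots.map f).sum = ((B * A).charpoly.roots.map f).sum := by
  rw [← sum_map_roots_X_pow_mul hf (Fintype.card n), charpoly_mul_comm',
    sum_map_roots_X_pow_mul hf]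

theorem sum_map_roots_charpoly_mul_mul_congr (hf : f 0 = 0) (H : Matrix n n K)
    {A : Matrix l n K} {B : Matrix n l K} {C : Matrix m n K} {D : Matrix n m K}
    (h : B * A = D * C) :
    ((A * H * B).charpoly.roots.map f).sum = ((C * H * D).charpoly.roots.map f).sum := by
  classical
  calc ((A * H * B).charpoly.roots.map f).sum
    _ = ((H * (B * A)).charpoly.roots.map f).sum := by
        rw [Matrix.mul_assoc, sum_map_roots_charpoly_mul_comm hf, Matrix.mul_assoc]
    _ = ((H * (D * C)).charpoly.roots.map f).sum := by rw [h]
    _ = ((C * H * D).charpoly.roots.map f).sum := by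
        rw [Matrix.mul_assoc C, sum_map_roots_charpoly_mul_comm hf C, Matrix.mul_assoc]

end RootSum

section Trace

open scoped ComplexOrder

variable {𝕜 : Type*} [RCLike 𝕜] {n : Type*} [Fintype n]

theorem roots_charpoly_pow_eq_eigenvalues_pow [DecidableEq n] {A : Matrix n n 𝕜}
    (hA : A.IsHermitian) (k : ℕ) :
    (A ^ k).charpoly.roots = Finset.univ.val.map fun i ↦ ((hA.eigenvalues i ^ k : ℝ) : 𝕜) := by
  rw [← cfc_pow_id (R := ℝ) A k hA.isSelfAdjoint, hA.charpoly_cfc_eq,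
    Polynomial.roots_prod _ _
      (Finset.prod_ne_zero_iff.mpr fun i _ ↦ Polynomial.X_sub_C_ne_zero _)]
  simp only [Polynomial.roots_X_sub_C, Multiset.bind_singleton]

theorem trace_eq_sum_sqrt_roots_charpoly_mul_self [DecidableEq n] {S : Matrix n n 𝕜}
    (hS : S.PosSemidef) :
    S.trace = ((S * S).charpoly.roots.map fun z ↦ ((√(RCLike.re z) : ℝ) : 𝕜)).sum := by
  rw [← pow_two, roots_charpoly_pow_eq_eigenvalues_pow hS.isHermitian,
    hS.isHermitian.trace_eq_sum_eigenvalues, Multiset.map_map, Finset.sum]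
  simp only [Function.comp_def, RCLike.ofReal_re, Real.sqrt_sq (hS.eigenvalues_nonneg _)]

theorem stmt10_general {l m : Type*} [Fintype l] [Fintype m] (H : Matrix n n 𝕜)
    {A : Matrix l n 𝕜} {B : Matrix n l 𝕜} {C : Matrix m n 𝕜} {D : Matrix n m 𝕜}
    (h : B * A = D * C)
    {S : Matrix l l 𝕜} (hS : S.PosSemidef) (hS_sq : S * S = A * H * B)
    {T : Matrix m m 𝕜} (hT : T.PosSemidef) (hT_sq : T * T = C * H * D) :
    S.trace = T.trace := by
  classical
  rw [trace_eq_sum_sqrt_roots_charpoly_mul_self hS, trace_eq_sum_sqrt_roots_charpoly_mul_self hT,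
    hS_sq, hT_sq]
  exact sum_map_roots_charpoly_mul_mul_congr (by simp) H h

end Trace

/-- With `G_i = Z_i Z_iᵀ` and `M = Z_jᵀ Z_i`, one has
`tr((G_i^{1/2} (Z_j Z_jᵀ) G_i^{1/2})^{1/2}) = tr((Mᵀ M)^{1/2})`.  Here `R` is the unique
positive-semidefinite square root of `G_i`, `S` the unique positive-semidefinite square
root of `G_i^{1/2} (Z_j Z_jᵀ) G_i^{1/2}`, and `T` the unique positive-semidefinite square
root of `Mᵀ M`. -/
theorem stmt10 (n d : ℕ) (hn : 0 < n) (hd : 0 < d)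
    (Zi Zj : Matrix (Fin n) (Fin d) ℝ)
    (R : Matrix (Fin n) (Fin n) ℝ) (hR : R.PosSemidef) (hR_sq : R * R = Zi * Ziᵀ)
    (S : Matrix (Fin n) (Fin n) ℝ) (hS : S.PosSemidef)
    (hS_sq : S * S = R * (Zj * Zjᵀ) * R)
    (T : Matrix (Fin d) (Fin d) ℝ) (hT : T.PosSemidef)
    (hT_sq : T * T = (Zjᵀ * Zi)ᵀ * (Zjᵀ * Zi)) :
    Matrix.trace S = Matrix.trace T :=
  stmt10_general (Zj * Zjᵀ) hR_sq hS hS_sq hT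
    (by rw [hT_sq, transpose_mul, transpose_transpose]; simp only [Matrix.mul_assoc])
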